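/- arXiv:2501.00201 — 3 statements merged into one kernel-verified Lean document; each statement's English description precedes it below -/
import Mathlib

section
/- Let N, U be positive integers, let α > 0, P_tx > 0, σ_sen² > 0 be reals, and set ρ_sen = σ_sen²/(2·α·N·P_tx). Let μ, μ' : {1,…,U} → {0,1} be admission vectors and let τ, τ' be reals with 0 ≤ τ ≤ α·N·P_tx/σ_sen² and 0 ≤ τ' ≤ α·N·P_tx/σ_sen². If Σ_{u=1}^U μ_u > Σ_{u=1}^U μ'_u, then Σ_{u=1}^U μ_u + ρ_sen·τ > Σ_{u=1}^U μ'_u + ρ_sen·τ'. (Thus with weights ρ_com = 1 and ρ_sen = σ_sen²/(2αNP_tx), any gain in the number of admitted users strictly dominates any possible change in the sensing term, i.e., communications has higher hierarchy.) -/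
/-- Hierarchical prioritization (Lemma 1): with weights ρ_com = 1 and
ρ_sen = σ_sen²/(2·α·N·P_tx), any strict gain in the number of admitted users
strictly dominates any possible change of the sensing term τ ∈ [0, α·N·P_tx/σ_sen²]. -/
theorem hierarchy_strict_dominance
    (N U : ℕ) (hN : 0 < N) (hU : 0 < U)
    (α Ptx σsen2 : ℝ) (hα : 0 < α) (hP : 0 < Ptx) (hσ : 0 < σsen2)
    (ρsen : ℝ) (hρ : ρsen = σsen2 / (2 * α * N * Ptx))
    (μ μ' : Fin U → ℝ)
    (hμ : ∀ u, μ u = 0 ∨ μ u = 1) (hμ' : ∀ u, μ' u = 0 ∨ μ' u = 1)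
    (τ τ' : ℝ)
    (hτ0 : 0 ≤ τ) (hτ1 : τ ≤ α * N * Ptx / σsen2)
    (hτ'0 : 0 ≤ τ') (hτ'1 : τ' ≤ α * N * Ptx / σsen2)
    (hgt : ∑ u, μ u > ∑ u, μ' u) :
    ∑ u, μ u + ρsen * τ > ∑ u, μ' u + ρsen * τ' := by
  have key : ∀ ν : Fin U → ℝ, (∀ u, ν u = 0 ∨ ν u = 1) → ∃ n : ℕ, ∑ u, ν u = (n : ℝ) := by
    intro ν hν
    have h : ∀ u, ∃ k : ℕ, ν u = (k : ℝ) := by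
      intro u
      rcases hν u with h | h
      · exact ⟨0, by simp [h]⟩
      · exact ⟨1, by simp [h]⟩
    choose k hk using h
    exact ⟨∑ u, k u, by simp [hk]⟩
  obtain ⟨a, ha⟩ := key μ hμ
  obtain ⟨b, hb⟩ := key μ' hμ'
  rw [ha, hb] at hgt ⊢
  have hab : (b : ℝ) + 1 ≤ a := by
    have h : b < a := by exact_mod_cast hgt
    exact_mod_cast h
  have hN' : (0 : ℝ) < N := by exact_mod_cast hN
  have hρ0 : 0 < ρsen := by rw [hρ]; positivity
  have h1 : ρsen * (α * N * Ptx / σsen2) = 1 / 2 := by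
    rw [hρ]; field_simp
  have h2 : ρsen * τ' ≤ 1 / 2 := h1 ▸ mul_le_mul_of_nonneg_left hτ'1 hρ0.le
  have h3 : 0 ≤ ρsen * τ := by positivity
  linarith
end

section
/- Let N, U be positive integers, let α > 0, P_tx > 0, σ_sen² > 0 be reals, and set ρ_sen = σ_sen²/(2·α·N·P_tx). Let μ, μ' : {1,…,U} → {0,1} and let τ, τ' be reals with 0 ≤ τ ≤ α·N·P_tx/σ_sen² and 0 ≤ τ' ≤ α·N·P_tx/σ_sen². If Σ_{u=1}^U μ_u + ρ_sen·τ ≥ Σ_{u=1}^U μ'_u + ρ_sen·τ', then Σ_{u=1}^U μ_u ≥ Σ_{u=1}^U μ'_u. (Maximizing the weighted objective never sacrifices a communication user for sensing gain.) -/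
theorem sum_binary_nat (U : ℕ) (f : Fin U → ℝ) (h : ∀ u, f u = 0 ∨ f u = 1) :
    ∃ n : ℕ, ∑ u, f u = (n : ℝ) := by
  have h2 : ∀ u, ∃ k : ℕ, f u = (k : ℝ) := by
    intro u
    rcases h u with h | h
    · exact ⟨0, by simp [h]⟩
    · exact ⟨1, by simp [h]⟩
  choose g hg using h2
  exact ⟨∑ u, g u, by push_cast; exact Finset.sum_congr rfl (fun u _ => hg u)⟩

/-- With weights ρ_com = 1 and ρ_sen = σ_sen²/(2·α·N·P_tx), maximizing the
weighted ISAC objective never sacrifices a communication user for sensing gain: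
a larger (or equal) weighted objective implies at least as many admitted users. -/
theorem hierarchy_no_sacrifice
    (N U : ℕ) (hN : 0 < N) (hU : 0 < U)
    (α Ptx σsen2 : ℝ) (hα : 0 < α) (hP : 0 < Ptx) (hσ : 0 < σsen2)
    (ρsen : ℝ) (hρ : ρsen = σsen2 / (2 * α * N * Ptx))
    (μ μ' : Fin U → ℝ)
    (hμ : ∀ u, μ u = 0 ∨ μ u = 1) (hμ' : ∀ u, μ' u = 0 ∨ μ' u = 1)
    (τ τ' : ℝ)
    (hτ0 : 0 ≤ τ) (hτ1 : τ ≤ α * N * Ptx / σsen2)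
    (hτ'0 : 0 ≤ τ') (hτ'1 : τ' ≤ α * N * Ptx / σsen2)
    (hge : ∑ u, μ u + ρsen * τ ≥ ∑ u, μ' u + ρsen * τ') :
    ∑ u, μ u ≥ ∑ u, μ' u := by
  obtain ⟨a, ha⟩ := sum_binary_nat U μ hμ
  obtain ⟨b, hb⟩ := sum_binary_nat U μ' hμ'
  have hNR : (0 : ℝ) < N := by exact_mod_cast hN
  have hρ0 : 0 < ρsen := by rw [hρ]; positivity
  have h1 : ρsen * τ ≤ 1 / 2 := by
    calc ρsen * τ ≤ ρsen * (α * N * Ptx / σsen2) := mul_le_mul_of_nonneg_left hτ1 hρ0.le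
      _ = 1 / 2 := by rw [hρ]; field_simp
  have h2 : 0 ≤ ρsen * τ' := by positivity
  rw [ha, hb] at hge ⊢
  by_contra hlt
  have hlt2 : a + 1 ≤ b := by
    have : (a : ℝ) < b := not_le.mp hlt
    exact_mod_cast this
  have h3 : (a : ℝ) + 1 ≤ b := by exact_mod_cast hlt2
  linarith
end

section
/- (Proposition 5) Let L be a positive integer, let x, y ∈ ℝ^L be one-hot vectors (entries in {0,1}, each summing to 1), and let Y be an L×L real matrix with all entries in [0,1]. Then Y = x·y^T if and only if both of the following hold: (i) for every column i, Σ_{l=1}^L [Y]_{l,i} = [y]_i, and (ii) for every row l, Σ_{i=1}^L [Y]_{l,i} = [x]_l. That is, the bilinear constraint Y = x y^T is equivalent to the linear constraints that the column sums of Y equal the entries of y and the row sums of Y equal the entries of x. -/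
/-- Proposition 5: for one-hot vectors x, y ∈ ℝ^L and a matrix Y with entries
in [0,1], the bilinear constraint Y = x y^T is equivalent to the linear
constraints that the column sums of Y equal the entries of y and the row sums
of Y equal the entries of x. -/
theorem bilinear_to_linear_equivalence
    (L : ℕ) (hL : 0 < L) (x y : Fin L → ℝ)
    (hx01 : ∀ l, x l = 0 ∨ x l = 1) (hx1 : ∑ l, x l = 1)
    (hy01 : ∀ i, y i = 0 ∨ y i = 1) (hy1 : ∑ i, y i = 1)
    (Y : Matrix (Fin L) (Fin L) ℝ)
    (hY : ∀ l i : Fin L, Y l i ∈ Set.Icc (0 : ℝ) 1) :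
    Y = Matrix.vecMulVec x y ↔
      ((∀ i : Fin L, ∑ l : Fin L, Y l i = y i) ∧
       (∀ l : Fin L, ∑ i : Fin L, Y l i = x l)) := by
  constructor
  · rintro rfl
    constructor
    · intro i
      simp only [Matrix.vecMulVec_apply]
      rw [← Finset.sum_mul, hx1, one_mul]
    · intro l
      simp only [Matrix.vecMulVec_apply]
      rw [← Finset.mul_sum, hy1, mul_one]
  · rintro ⟨hc, hr⟩
    have hle_y : ∀ l i, Y l i ≤ y i := fun l i => by
      rw [← hc i]
      exact Finset.single_le_sum (f := fun k => Y k i) (fun k _ => (hY k i).1) (Finset.mem_univ l)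
    have hle_x : ∀ l i, Y l i ≤ x l := fun l i => by
      rw [← hr l]
      exact Finset.single_le_sum (f := fun k => Y l k) (fun k _ => (hY l k).1) (Finset.mem_univ i)
    have hx0 : ∀ l, 0 ≤ x l := fun l => by
      rcases hx01 l with h | h <;> rw [h] <;> norm_num
    ext l i
    rw [Matrix.vecMulVec_apply]
    rcases hx01 l with h | h
    · have h1 := hle_x l i
      have h2 := (hY l i).1
      rw [h, zero_mul]
      linarith
    · rw [h, one_mul, ← hc i]
      symm
      apply Finset.sum_eq_single l
      · intro k _ hk
        have h3 : x l + x k ≤ ∑ l, x l :=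
          Finset.add_le_sum (fun j _ => hx0 j) (Finset.mem_univ l) (Finset.mem_univ k) hk.symm
        have h1 := hle_x k i
        have h2 := (hY k i).1
        linarith
      · intro hn
        exact absurd (Finset.mem_univ l) hn
end
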